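/- Let T be any (k+1)-tensor on ℝ^n, x any vector in ℝ^n, V any orthogonal n×n matrix, and σ a permutation on {1,…,k}. Then V(Diag^σ(T[x]))Vᵀ = (V(Diag^{σ_{(k+1)}} T)Vᵀ)[V(Diag x)Vᵀ], where T[x] denotes the k-tensor T[·,…,·,x] and, for a 2(k+1)-tensor S viewed as a (k+1)-tensor on matrices, S[H] denotes the 2k-tensor obtained by fixing the last matrix argument to H. -/

import Mathlib

open scoped BigOperators
open Filter Asymptotics Matrix

attribute [local instance] Matrix.normedAddCommGroup

noncomputable section

/-- A `k`-tensor on `ℝ^n`, identified with its array of entries. -/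
abbrev Tensor (k n : ℕ) : Type := (Fin k → Fin n) → ℝ

/-- A `2k`-tensor on `ℝ^n`, with its indices grouped into two groups of `k`. -/
abbrev Tensor2 (k n : ℕ) : Type := (Fin k → Fin n) → (Fin k → Fin n) → ℝ

/-- The `σ`-Hadamard product of `k` matrices:
`(H₁ ∘_σ ⋯ ∘_σ H_k)^{i₁…i_k} = ∏ s, H_s^{i_s i_{σ⁻¹(s)}}`. -/
def hadamardProd {k n : ℕ} (σ : Equiv.Perm (Fin k))
    (H : Fin k → Matrix (Fin n) (Fin n) ℝ) : Tensor k n :=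
  fun i => ∏ s, H s (i s) (i (σ⁻¹ s))

/-- The dot product of two `k`-tensors. -/
def tdot {k n : ℕ} (T₁ T₂ : Tensor k n) : ℝ :=
  ∑ p : Fin k → Fin n, T₁ p * T₂ p

/-- `Diag^σ T`, the `2k`-tensor equal to `T^{i₁…i_k}` when `i_s = j_{σ(s)}` for all `s`,
and `0` otherwise. -/
def diagPerm {k n : ℕ} (σ : Equiv.Perm (Fin k)) (T : Tensor k n) : Tensor2 k n :=
  fun i j => if ∀ s, i s = j (σ s) then T i else 0

/-- A `2k`-tensor viewed as a `k`-tensor on matrix arguments: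
`S[H₁,…,H_k] = ∑_{p,q} S^{p₁…p_k}_{q₁…q_k} ∏ s, H_s^{p_s q_s}`. -/
def apply2 {k n : ℕ} (S : Tensor2 k n)
    (H : Fin k → Matrix (Fin n) (Fin n) ℝ) : ℝ :=
  ∑ p : Fin k → Fin n, ∑ q : Fin k → Fin n, S p q * ∏ s, H s (p s) (q s)

/-- Conjugation `U S Uᵀ` of a `2k`-tensor `S` by a matrix `U`. -/
def conj2 {k n : ℕ} (U : Matrix (Fin n) (Fin n) ℝ) (S : Tensor2 k n) : Tensor2 k n :=
  fun i j => ∑ p : Fin k → Fin n, ∑ q : Fin k → Fin n,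
    S p q * ((∏ s, U (i s) (p s)) * ∏ s, U (j s) (q s))

/-- For a `2(k+1)`-tensor `S` viewed as a `(k+1)`-tensor on matrices, `S[H]` fixes the last
matrix argument to `H`, producing a `2k`-tensor. -/
def lastApply {k n : ℕ} (S : Tensor2 (k+1) n)
    (H : Matrix (Fin n) (Fin n) ℝ) : Tensor2 k n :=
  fun i j => ∑ a : Fin n, ∑ b : Fin n, S (Fin.snoc i a) (Fin.snoc j b) * H a b

/-- `T[x]`: contraction of the last index of a `(k+1)`-tensor against a vector. -/
def contract {k n : ℕ} (T : Tensor (k+1) n) (x : Fin n → ℝ) : Tensor k n :=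
  fun i => ∑ a : Fin n, T (Fin.snoc i a) * x a

/-- A permutation `σ` of `{1,…,k}` viewed as a permutation of `{1,…,k+1}` fixing `k+1`. -/
def extPerm {k : ℕ} (σ : Equiv.Perm (Fin k)) : Equiv.Perm (Fin (k+1)) :=
  (Equiv.permCongr finSuccEquivLast).symm σ.optionCongr

/-- `σ_{(l)} := σ ∘ τ_l`, where `τ_l` is the transposition `(l, k+1)` (and `σ` fixes `k+1`).
Here `l : Fin (k+1)`; taking `l = Fin.last k` gives `σ_{(k+1)} = σ`. -/
def permIns {k : ℕ} (σ : Equiv.Perm (Fin k)) (l : Fin (k+1)) : Equiv.Perm (Fin (k+1)) :=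
  extPerm σ * Equiv.swap l (Fin.last k)

/-- A tensor is `μ`-block-constant if its entries agree on componentwise `μ`-equivalent
multi-indices (`i ∼ j` iff `μ i = μ j`). -/
def BlockConstant {k n : ℕ} (μ : Fin n → ℝ) (T : Tensor k n) : Prop :=
  ∀ i j : Fin k → Fin n, (∀ s, μ (i s) = μ (j s)) → T i = T j

/-- `H_in`: the diagonal-block part of `H` (w.r.t. the blocks of `μ`). -/
def matIn {n : ℕ} (μ : Fin n → ℝ) (H : Matrix (Fin n) (Fin n) ℝ) :
    Matrix (Fin n) (Fin n) ℝ :=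
  Matrix.of fun i j => if μ i = μ j then H i j else 0

/-- `H_out = H - H_in`: the off-diagonal-block part of `H`. -/
def matOut {n : ℕ} (μ : Fin n → ℝ) (H : Matrix (Fin n) (Fin n) ℝ) :
    Matrix (Fin n) (Fin n) ℝ :=
  H - matIn μ H

/-- The divided-difference tensor `T^{(l)}_out` of a `k`-tensor `T`, a `(k+1)`-tensor. -/
def outDD {k n : ℕ} (μ : Fin n → ℝ) (T : Tensor k n) (l : Fin k) : Tensor (k+1) n :=
  fun i => if μ (i l.castSucc) = μ (i (Fin.last k)) then 0
    else (T (Function.update (fun s => i s.castSucc) l (i (Fin.last k)))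
          - T (fun s => i s.castSucc)) / (μ (i (Fin.last k)) - μ (i l.castSucc))

/-- `T^{τ_l}`: the `(k+1)`-tensor equal to `T^{i₁…i_k}` on the hyperplane `i_l = i_{k+1}`
and `0` elsewhere. -/
def liftTau {k n : ℕ} (T : Tensor k n) (l : Fin k) : Tensor (k+1) n :=
  fun i => if i l.castSucc = i (Fin.last k) then T (fun s => i s.castSucc) else 0

/-- `T^{τ_l}_in`: the "inflated" `(k+1)`-tensor, equal to
`T^{i₁…i_{l-1} i_{k+1} i_{l+1}…i_k}` when `μ_{i_l} = μ_{i_{k+1}}` and `0` otherwise. -/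
def liftTauIn {k n : ℕ} (μ : Fin n → ℝ) (T : Tensor k n) (l : Fin k) : Tensor (k+1) n :=
  fun i => if μ (i l.castSucc) = μ (i (Fin.last k))
    then T (Function.update (fun s => i s.castSucc) l (i (Fin.last k))) else 0

/-- `lam` is the map sending each symmetric matrix to the vector of its eigenvalues
ordered nonincreasingly: it is nonincreasing and realized by an orthogonal
diagonalization. -/
def IsEigCF {n : ℕ} (lam : Matrix (Fin n) (Fin n) ℝ → Fin n → ℝ) : Prop :=
  ∀ A : Matrix (Fin n) (Fin n) ℝ, A.IsSymm →
    Antitone (lam A) ∧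
    ∃ U : Matrix (Fin n) (Fin n) ℝ, Uᵀ * U = 1 ∧
      A = U * Matrix.diagonal (lam A) * Uᵀ

/-- `h` is the concatenated vector `(λ(X₁ᵀ A X₁), …, λ(X_rᵀ A X_r))` of the nonincreasingly
ordered eigenvalues of the diagonal blocks of `A` (blocks determined by `μ`):
equivalently, `h` is nonincreasing within each block of `μ` and `Diag h` is obtained from
`A_in` by conjugating with a block-diagonal orthogonal matrix. -/
def IsBlockEig {n : ℕ} (μ : Fin n → ℝ) (A : Matrix (Fin n) (Fin n) ℝ)
    (h : Fin n → ℝ) : Prop :=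
  (∀ i j : Fin n, i ≤ j → μ i = μ j → h j ≤ h i) ∧
  ∃ V : Matrix (Fin n) (Fin n) ℝ, Vᵀ * V = 1 ∧
    (∀ i j, μ i ≠ μ j → V i j = 0) ∧
    Vᵀ * matIn μ A * V = Matrix.diagonal h

theorem sum_snoc_aux {k n : ℕ} (f : (Fin (k+1) → Fin n) → ℝ) :
    ∑ P, f P = ∑ p : Fin k → Fin n, ∑ c : Fin n, f (Fin.snoc p c) := by
  rw [Finset.sum_comm, ← Fintype.sum_prod_type',
    ← Equiv.sum_comp (Fin.snocEquiv (fun _ : Fin (k+1) => Fin n))]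
  rfl

theorem extPerm_castSucc_aux {k : ℕ} (σ : Equiv.Perm (Fin k)) (s : Fin k) :
    extPerm σ s.castSucc = (σ s).castSucc := by
  simp [extPerm, Equiv.permCongr]

theorem extPerm_last_aux {k : ℕ} (σ : Equiv.Perm (Fin k)) :
    extPerm σ (Fin.last k) = Fin.last k := by
  simp [extPerm, Equiv.permCongr]

theorem diagPerm_snoc_aux {k n : ℕ} (σ : Equiv.Perm (Fin k)) (T : Tensor (k+1) n)
    (p q : Fin k → Fin n) (c d : Fin n) :
    diagPerm (extPerm σ) T (Fin.snoc p c) (Fin.snoc q d)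
      = if c = d then (if ∀ s, p s = q (σ s) then T (Fin.snoc p c) else 0) else 0 := by
  unfold diagPerm
  rw [← ite_and]
  refine if_congr ?_ rfl rfl
  rw [Fin.forall_fin_succ', and_comm]
  simp [extPerm_castSucc_aux, extPerm_last_aux]

theorem key_aux {n : ℕ} (x : Fin n → ℝ) (V : Matrix (Fin n) (Fin n) ℝ) (hV : Vᵀ * V = 1)
    (c : Fin n) :
    ∑ a, ∑ b, V a c * V b c * (V * Matrix.diagonal x * Vᵀ) a b = x c := by
  have h : Vᵀ * (V * Matrix.diagonal x * Vᵀ) * V = Matrix.diagonal x := by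
    calc Vᵀ * (V * Matrix.diagonal x * Vᵀ) * V
        = (Vᵀ * V) * Matrix.diagonal x * (Vᵀ * V) := by simp only [Matrix.mul_assoc]
      _ = _ := by rw [hV]; simp
  have h2 := congrFun (congrFun h c) c
  rw [Matrix.diagonal_apply_eq] at h2
  rw [← h2, Matrix.mul_apply, Finset.sum_comm]
  refine Finset.sum_congr rfl fun b _ => ?_
  rw [Matrix.mul_apply, Finset.sum_mul]
  refine Finset.sum_congr rfl fun a _ => ?_
  rw [Matrix.transpose_apply]
  ring

/-- Proposition `prop11`. For any `(k+1)`-tensor `T`, vector `x`,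
orthogonal `V`, and permutation `σ` of `{1,…,k}`:
`V(Diag^σ(T[x]))Vᵀ = (V(Diag^{σ_{(k+1)}} T)Vᵀ)[V(Diag x)Vᵀ]`. -/
theorem statement10 {n k : ℕ} (T : Tensor (k+1) n) (x : Fin n → ℝ)
    (V : Matrix (Fin n) (Fin n) ℝ) (hV : Vᵀ * V = 1)
    (σ : Equiv.Perm (Fin k)) :
    conj2 V (diagPerm σ (contract T x))
      = lastApply (conj2 V (diagPerm (extPerm σ) T)) (V * Matrix.diagonal x * Vᵀ) := by
  funext i j
  have hc : ∀ a b, conj2 V (diagPerm (extPerm σ) T) (Fin.snoc i a) (Fin.snoc j b)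
      = ∑ p : Fin k → Fin n, ∑ q : Fin k → Fin n, ∑ c,
        (if ∀ s, p s = q (σ s) then T (Fin.snoc p c) else 0)
          * ((∏ s, V (i s) (p s)) * ∏ s, V (j s) (q s)) * (V a c * V b c) := by
    intro a b
    unfold conj2
    rw [sum_snoc_aux]
    refine Finset.sum_congr rfl fun p _ => ?_
    rw [Finset.sum_comm]
    rw [Finset.sum_comm, Finset.sum_comm (s := (Finset.univ : Finset (Fin k → Fin n)))]
    refine Finset.sum_congr rfl fun c _ => ?_
    rw [sum_snoc_aux]
    refine Finset.sum_congr rfl fun q _ => ?_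
    simp only [diagPerm_snoc_aux, Fin.prod_univ_castSucc, Fin.snoc_castSucc, Fin.snoc_last]
    rw [Finset.sum_eq_single c]
    · rw [if_pos rfl]; ring
    · intro d _ hd
      rw [if_neg (Ne.symm hd), zero_mul]
    · simp
  unfold lastApply
  simp only [hc, Finset.sum_mul]
  have hl : ∀ f : Fin n → Fin n → (Fin k → Fin n) → (Fin k → Fin n) → Fin n → ℝ,
      ∑ a, ∑ b, ∑ p, ∑ q, ∑ c, f a b p q c = ∑ p, ∑ q, ∑ c, ∑ a, ∑ b, f a b p q c := by
    intro f
    simp only [← Fintype.sum_prod_type']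
    refine Fintype.sum_equiv
      ⟨fun t => (t.2.2.1, t.2.2.2.1, t.2.2.2.2, t.1, t.2.1),
       fun t => (t.2.2.2.1, t.2.2.2.2, t.1, t.2.1, t.2.2.1),
       fun _ => rfl, fun _ => rfl⟩ _ _ fun _ => rfl
  rw [hl]
  unfold conj2
  refine Finset.sum_congr rfl fun p _ => Finset.sum_congr rfl fun q _ => ?_
  have : ∀ c, ∑ a, ∑ b, (if ∀ s, p s = q (σ s) then T (Fin.snoc p c) else 0)
          * ((∏ s, V (i s) (p s)) * ∏ s, V (j s) (q s)) * (V a c * V b c)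
          * (V * Matrix.diagonal x * Vᵀ) a b
      = (if ∀ s, p s = q (σ s) then T (Fin.snoc p c) else 0)
          * ((∏ s, V (i s) (p s)) * ∏ s, V (j s) (q s)) * x c := by
    intro c
    rw [← key_aux x V hV c, Finset.mul_sum]
    refine Finset.sum_congr rfl fun a _ => ?_
    rw [Finset.mul_sum]
    refine Finset.sum_congr rfl fun b _ => ?_
    ring
  simp only [this]
  unfold diagPerm contract
  split_ifs
  · rw [Finset.sum_mul]
    refine Finset.sum_congr rfl fun c _ => ?_
    ring
  · simp

end
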